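/- arXiv:1212.3934 — 4 statements merged into one kernel-verified Lean document; each statement's English description precedes it below -/
import Mathlib

section
/- Let V : ℝ³ → ℝ³ be a vector field, c ∈ ℝ, and let (φ_t)_{t∈ℝ} be a one-parameter group of orientation-preserving affine isometries of ℝ³ (φ_0 = id, φ_{t+s} = φ_t ∘ φ_s, each φ_t an isometry of ℝ³ whose linear part has determinant 1) generated by V, i.e. for every y ∈ ℝ³ the map t ↦ φ_t(y) has derivative V(φ_t(y)) at every t. Let γ₀ : ℝ → ℝ³ be a smooth curve and define γ(t,s) := φ_t(γ₀(s − ct)). Then γ solves the locally induction equation ∂γ/∂t = ∂γ/∂s × ∂²γ/∂s² for all (t,s) if and only if γ₀ satisfies the Killing magnetic geodesic equation γ₀'(s) × γ₀''(s) = V(γ₀(s)) − c·γ₀'(s) for all s. -/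
/-!
Write `A t` for the linear part of `φ t` and `u = s - c * t`. Then `∂γ/∂s = A t (γ₀' u)` and
`∂²γ/∂s² = A t (γ₀'' u)`. A rotation commutes with the cross product (`map_cross3`), so the right
side of the locally induction equation is `A t (γ₀' u × γ₀'' u)`. By the product rule
(`hasDerivAt_isometry_apply`), `∂γ/∂t = V (φ t (γ₀ u)) - c • A t (γ₀' u)`, and a one-parameter
group preserves its own generator, `V (φ t y) = A t (V y)` (`generator_equivariant`). Hence the
locally induction equation at `(t, s)` is the image under the injective map `A t` of the Killing
magnetic geodesic equation at `u`; every real number arises as such a `u` at `t = 0`.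
-/

/-- The cross product on Euclidean 3-space. -/
noncomputable def cross3 (a b : EuclideanSpace ℝ (Fin 3)) : EuclideanSpace ℝ (Fin 3) :=
  (WithLp.equiv 2 (Fin 3 → ℝ)).symm
    (crossProduct (WithLp.equiv 2 (Fin 3 → ℝ) a) (WithLp.equiv 2 (Fin 3 → ℝ) b))

/-- The triple product, as the determinant with respect to the standard basis. Through this the
determinant hypothesis on a linear map controls its effect on cross products. -/
theorem inner_cross3 (a b d : EuclideanSpace ℝ (Fin 3)) :
    inner ℝ (cross3 a b) d
      = (EuclideanSpace.basisFun (Fin 3) ℝ).toBasis.det ![d, a, b] := by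
  rw [Module.Basis.det_apply, ← Matrix.det_transpose, EuclideanSpace.inner_eq_star_dotProduct]
  change d.ofLp ⬝ᵥ crossProduct a.ofLp b.ofLp = _
  rw [triple_product_eq_det]
  congr 1
  ext i j
  fin_cases i <;> rfl

theorem map_cross3 (A : EuclideanSpace ℝ (Fin 3) ≃ₗᵢ[ℝ] EuclideanSpace ℝ (Fin 3))
    (hA : LinearEquiv.det A.toLinearEquiv = 1) (a b : EuclideanSpace ℝ (Fin 3)) :
    cross3 (A a) (A b) = A (cross3 a b) := by
  refine ext_inner_right ℝ fun d => ?_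
  obtain ⟨d, rfl⟩ := A.surjective d
  have hdet : LinearMap.det (A.toLinearEquiv : EuclideanSpace ℝ (Fin 3) →ₗ[ℝ] _) = 1 := by
    rw [← LinearEquiv.coe_det, hA, Units.val_one]
  have hcomp := (EuclideanSpace.basisFun (Fin 3) ℝ).toBasis.det_comp
    (A.toLinearEquiv : EuclideanSpace ℝ (Fin 3) →ₗ[ℝ] _) ![d, a, b]
  have hvec : (A.toLinearEquiv : EuclideanSpace ℝ (Fin 3) →ₗ[ℝ] _) ∘ ![d, a, b]
      = ![A d, A a, A b] := by
    ext i : 1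
    fin_cases i <;> rfl
  rw [A.inner_map_map, inner_cross3, inner_cross3, ← hvec, hcomp, hdet, one_mul]

theorem isometry_apply_eq (f : EuclideanSpace ℝ (Fin 3) ≃ᵃⁱ[ℝ] EuclideanSpace ℝ (Fin 3))
    (y z : EuclideanSpace ℝ (Fin 3)) : f y = f z + f.linearIsometryEquiv (y - z) := by
  have h := f.map_vsub y z
  simp only [vsub_eq_sub] at h
  rw [h, add_sub_cancel]

theorem hasDerivAt_comp_isometry
    (f : EuclideanSpace ℝ (Fin 3) ≃ᵃⁱ[ℝ] EuclideanSpace ℝ (Fin 3))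
    {y : ℝ → EuclideanSpace ℝ (Fin 3)} {y' : EuclideanSpace ℝ (Fin 3)} {t : ℝ}
    (hy : HasDerivAt y y' t) :
    HasDerivAt (fun τ => f (y τ)) (f.linearIsometryEquiv y') t := by
  rw [funext fun τ => isometry_apply_eq f (y τ) (y t)]
  exact (f.linearIsometryEquiv.toContinuousLinearEquiv.hasFDerivAt.comp_hasDerivAt t
    (hy.sub_const (y t))).const_add (f (y t))

/-- Differentiating `φ (t + τ) y = φ t (φ τ y)` at `τ = 0`: a one-parameter group of isometries
preserves its generator. -/
theorem generator_equivariant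
    (V : EuclideanSpace ℝ (Fin 3) → EuclideanSpace ℝ (Fin 3))
    (φ : ℝ → EuclideanSpace ℝ (Fin 3) ≃ᵃⁱ[ℝ] EuclideanSpace ℝ (Fin 3))
    (hφ0 : φ 0 = AffineIsometryEquiv.refl ℝ (EuclideanSpace ℝ (Fin 3)))
    (hφgroup : ∀ t s : ℝ, ∀ y, φ (t + s) y = φ t (φ s y))
    (hφgen : ∀ y, ∀ t : ℝ, HasDerivAt (fun τ : ℝ => φ τ y) (V (φ t y)) t)
    (t : ℝ) (y : EuclideanSpace ℝ (Fin 3)) :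
    V (φ t y) = (φ t).linearIsometryEquiv (V y) := by
  have hl : HasDerivAt (fun τ => φ (t + τ) y) (V (φ t y)) 0 := by
    have h := hφgen y (t + 0)
    simpa using h.comp_const_add t 0
  have hr : HasDerivAt (fun τ => φ t (φ τ y)) ((φ t).linearIsometryEquiv (V y)) 0 := by
    have h := hasDerivAt_comp_isometry (φ t) (hφgen y 0)
    simpa [hφ0] using h
  simp_rw [hφgroup] at hl
  exact hl.unique hr

/-- The product rule for a moving isometry applied to a moving point. Only the pointwise
derivatives of `τ ↦ φ τ y` are known, so the displacement `y τ - y t` is expanded in the standard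
basis; its coordinates vanish at `τ = t`, so the derivatives of the linear parts drop out. -/
theorem hasDerivAt_isometry_apply
    (V : EuclideanSpace ℝ (Fin 3) → EuclideanSpace ℝ (Fin 3))
    (φ : ℝ → EuclideanSpace ℝ (Fin 3) ≃ᵃⁱ[ℝ] EuclideanSpace ℝ (Fin 3))
    (hφgen : ∀ y, ∀ t : ℝ, HasDerivAt (fun τ : ℝ => φ τ y) (V (φ t y)) t)
    {y : ℝ → EuclideanSpace ℝ (Fin 3)} {y' : EuclideanSpace ℝ (Fin 3)} {t : ℝ}
    (hy : HasDerivAt y y' t) :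
    HasDerivAt (fun τ => φ τ (y τ)) (V (φ t (y t)) + (φ t).linearIsometryEquiv y') t := by
  let e := EuclideanSpace.basisFun (Fin 3) ℝ
  have hexp : ∀ (τ : ℝ) (w : EuclideanSpace ℝ (Fin 3)), (φ τ).linearIsometryEquiv w
      = ∑ i, w i • (φ τ).linearIsometryEquiv (e i) := by
    intro τ w
    conv_lhs => rw [← e.sum_repr w]
    simp [e]
  have hA : ∀ w, HasDerivAt (fun τ => (φ τ).linearIsometryEquiv w) (V (φ t w) - V (φ t 0)) t := by
    intro w
    refine ((hφgen w t).sub (hφgen 0 t)).congr_of_eventuallyEq (Filter.Eventually.of_forall ?_)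
    intro τ
    simpa using (φ τ).map_vsub w 0
  have hz : ∀ i, HasDerivAt (fun τ => (y τ - y t) i) (y' i) t := fun i =>
    ((EuclideanSpace.proj (𝕜 := ℝ) i).hasFDerivAt.comp_hasDerivAt t (hy.sub_const (y t)))
  have hsum := HasDerivAt.fun_sum (u := Finset.univ) fun i _ => (hz i).smul (hA (e i))
  rw [funext fun τ => isometry_apply_eq (φ τ) (y τ) (y t)]
  refine (hφgen (y t) t).add ?_
  rw [funext fun τ => hexp τ (y τ - y t), hexp t y']
  convert hsum using 1 <;> simp

/-- if `(φ_t)` is a one-parameter group of orientation-preserving affine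
isometries of `ℝ³` generated by the vector field `V`, `γ₀` is a smooth curve and
`γ(t,s) = φ_t(γ₀(s - c t))`, then `γ` solves the locally induction equation
`∂γ/∂t = ∂γ/∂s × ∂²γ/∂s²` iff `γ₀` solves the Killing magnetic geodesic equation
`γ₀' × γ₀'' = V(γ₀) - c γ₀'`. -/
theorem lie_soliton_iff_killing_magnetic_geodesic
    (V : EuclideanSpace ℝ (Fin 3) → EuclideanSpace ℝ (Fin 3)) (c : ℝ)
    (φ : ℝ → EuclideanSpace ℝ (Fin 3) ≃ᵃⁱ[ℝ] EuclideanSpace ℝ (Fin 3))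
    (hφ0 : φ 0 = AffineIsometryEquiv.refl ℝ (EuclideanSpace ℝ (Fin 3)))
    (hφgroup : ∀ t s : ℝ, ∀ y, φ (t + s) y = φ t (φ s y))
    (hφdet : ∀ t : ℝ, LinearEquiv.det (φ t).linearIsometryEquiv.toLinearEquiv = 1)
    (hφgen : ∀ y, ∀ t : ℝ, HasDerivAt (fun τ : ℝ => φ τ y) (V (φ t y)) t)
    (γ₀ : ℝ → EuclideanSpace ℝ (Fin 3)) (hγ₀ : ContDiff ℝ (⊤ : ℕ∞) γ₀)
    (γ : ℝ → ℝ → EuclideanSpace ℝ (Fin 3))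
    (hγ : ∀ t s : ℝ, γ t s = φ t (γ₀ (s - c * t))) :
    (∀ t s : ℝ, deriv (fun τ => γ τ s) t
        = cross3 (deriv (γ t) s) (deriv (deriv (γ t)) s))
      ↔
    (∀ s : ℝ, cross3 (deriv γ₀ s) (deriv (deriv γ₀) s)
        = V (γ₀ s) - c • deriv γ₀ s) := by
  have hγ₁ : ∀ s, HasDerivAt γ₀ (deriv γ₀ s) s := fun s =>
    (hγ₀.differentiable (by simp) s).hasDerivAt
  have hγ₂ : ∀ s, HasDerivAt (deriv γ₀) (deriv (deriv γ₀) s) s := fun s =>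
    (((contDiff_infty_iff_deriv.1 hγ₀).2).differentiable (by simp) s).hasDerivAt
  have hs₁ : ∀ t, deriv (γ t)
      = fun s => (φ t).linearIsometryEquiv (deriv γ₀ (s - c * t)) := by
    intro t
    rw [funext (hγ t)]
    funext s
    exact (hasDerivAt_comp_isometry (φ t) ((hγ₁ _).comp_sub_const s (c * t))).deriv
  have hs₂ : ∀ t s, deriv (deriv (γ t)) s
      = (φ t).linearIsometryEquiv (deriv (deriv γ₀) (s - c * t)) := by
    intro t s
    rw [hs₁]
    exact ((φ t).linearIsometryEquiv.toContinuousLinearEquiv.hasFDerivAt.comp_hasDerivAt s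
      ((hγ₂ _).comp_sub_const s (c * t))).deriv
  have ht : ∀ t s, deriv (fun τ => γ τ s) t = (φ t).linearIsometryEquiv
      (V (γ₀ (s - c * t)) - c • deriv γ₀ (s - c * t)) := by
    intro t s
    simp_rw [hγ]
    have hu : HasDerivAt (fun τ : ℝ => s - c * τ) (-c) t := by
      simpa using ((hasDerivAt_id t).const_mul c).const_sub s
    have hy : HasDerivAt (fun τ => γ₀ (s - c * τ)) (-c • deriv γ₀ (s - c * t)) t :=
      (hγ₁ _).scomp t hu
    rw [(hasDerivAt_isometry_apply V φ hφgen hy).deriv,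
      generator_equivariant V φ hφ0 hφgroup hφgen, ← map_add, neg_smul, ← sub_eq_add_neg]
  have key : ∀ t s, (deriv (fun τ => γ τ s) t = cross3 (deriv (γ t) s) (deriv (deriv (γ t)) s)) ↔
      cross3 (deriv γ₀ (s - c * t)) (deriv (deriv γ₀) (s - c * t))
        = V (γ₀ (s - c * t)) - c • deriv γ₀ (s - c * t) := by
    intro t s
    rw [ht, hs₂, hs₁, map_cross3 _ (hφdet t), (φ t).linearIsometryEquiv.injective.eq_iff, eq_comm]
  simp_rw [key]
  exact ⟨fun h s => by simpa using h 0 s, fun h t s => h _⟩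
end

section
/- Let A be a skew-symmetric real 3×3 matrix (Aᵀ = −A), c ∈ ℝ, and v : ℝ → ℝ³ a smooth curve with |v(s)| = 1 and |v'(s)| = 1 for all s (a unit-speed curve on S²). If v satisfies the reduced Schrödinger soliton equation v(s) × v''(s) = A·v(s) − c·v'(s) for all s, then the Killing field y ↦ A·y is tangent to the curve: A·v(s) = ⟨A·v(s), v'(s)⟩ · v'(s) for all s. -/
/-!
Differentiating `|v|² = 1` and `|v'|² = 1` gives `v ⊥ v'` and `v'' ⊥ v'`. Hence
`v' × (v × v'') = ⟨v', v''⟩ v - ⟨v', v⟩ v'' = 0`, so `v × v''` is a multiple of the unit vector `v'`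
(`cross3_eq_smul_of_orthogonal`). By the soliton equation `A·v = v × v'' + c v'` is then also a
multiple of `v'`, and the factor is its inner product with `v'`.
-/

open scoped Matrix RealInnerProductSpace

/-- The action of a `3 × 3` real matrix on Euclidean 3-space. -/
noncomputable def mulVecE (M : Matrix (Fin 3) (Fin 3) ℝ) (x : EuclideanSpace ℝ (Fin 3)) :
    EuclideanSpace ℝ (Fin 3) :=
  (WithLp.equiv 2 (Fin 3 → ℝ)).symm (M.mulVec (WithLp.equiv 2 (Fin 3 → ℝ) x))

/-- A curve of constant norm `1` is orthogonal to its derivative. -/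
lemma inner_deriv_eq_zero_of_norm_eq_one {f : ℝ → EuclideanSpace ℝ (Fin 3)}
    (hf : Differentiable ℝ f) (h : ∀ s, ‖f s‖ = 1) (s : ℝ) : ⟪f s, deriv f s⟫ = 0 := by
  have h1 := (hf s).hasDerivAt.inner ℝ (hf s).hasDerivAt
  have h2 : (fun t => ⟪f t, f t⟫) = fun _ => (1 : ℝ) := by
    funext t
    rw [real_inner_self_eq_norm_sq, h t, one_pow]
  rw [h2] at h1
  have h3 := h1.unique (hasDerivAt_const s (1 : ℝ))
  rw [real_inner_comm (f s) (deriv f s)] at h3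
  linarith

/-- The cross product of two vectors orthogonal to a unit vector `t` is a multiple of `t`. -/
lemma cross3_eq_smul_of_orthogonal {p t w : EuclideanSpace ℝ (Fin 3)}
    (ht : ‖t‖ = 1) (hp : ⟪p, t⟫ = 0) (hw : ⟪t, w⟫ = 0) :
    cross3 p w = ⟪cross3 p w, t⟫ • t := by
  have hT : ⟪t, t⟫ = 1 := by rw [real_inner_self_eq_norm_sq, ht, one_pow]
  simp only [PiLp.inner_apply, Fin.sum_univ_three, RCLike.inner_apply, conj_trivial] at hT hp hw
  -- With `u = p × w`: `⟨t, t⟩ u - ⟨t, u⟩ t = -t × (t × u) = ⟨t, p⟩ (t × w) - ⟨t, w⟩ (t × p)`.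
  ext i
  fin_cases i <;>
    simp [cross3, PiLp.inner_apply, Fin.sum_univ_three, cross_apply]
  · linear_combination (-(p 1 * w 2 - p 2 * w 1)) * hT
      - (t 1 * p 2 - t 2 * p 1) * hw + (t 1 * w 2 - t 2 * w 1) * hp
  · linear_combination (-(p 2 * w 0 - p 0 * w 2)) * hT
      - (t 2 * p 0 - t 0 * p 2) * hw + (t 2 * w 0 - t 0 * w 2) * hp
  · linear_combination (-(p 0 * w 1 - p 1 * w 0)) * hT
      - (t 0 * p 1 - t 1 * p 0) * hw + (t 0 * w 1 - t 1 * w 0) * hp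

/-- if a unit-speed spherical curve `v` satisfies the reduced Schrödinger
soliton equation `v × v'' = A·v - c·v'` (`A` skew-symmetric), then the Killing field
`y ↦ A·y` is tangent to the curve: `A·v = ⟨A·v, v'⟩ v'`. -/
theorem killing_field_tangent_along_soliton
    (A : Matrix (Fin 3) (Fin 3) ℝ) (hA : Aᵀ = -A) (c : ℝ)
    (v : ℝ → EuclideanSpace ℝ (Fin 3)) (hv : ContDiff ℝ (⊤ : ℕ∞) v)
    (hnorm : ∀ s : ℝ, ‖v s‖ = 1) (hspeed : ∀ s : ℝ, ‖deriv v s‖ = 1)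
    (heq : ∀ s : ℝ, cross3 (v s) (deriv (deriv v) s)
        = mulVecE A (v s) - c • deriv v s) :
    ∀ s : ℝ, mulVecE A (v s) = ⟪mulVecE A (v s), deriv v s⟫ • deriv v s := by
  intro s
  have hd : Differentiable ℝ v := hv.differentiable (by simp)
  have hd' : Differentiable ℝ (deriv v) :=
    (contDiff_infty_iff_deriv.mp hv).2.differentiable (by simp)
  have hA_eq : mulVecE A (v s) = cross3 (v s) (deriv (deriv v) s) + c • deriv v s := by
    rw [heq s, sub_add_cancel]
  have hcross := cross3_eq_smul_of_orthogonal (hspeed s)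
    (inner_deriv_eq_zero_of_norm_eq_one hd hnorm s)
    (inner_deriv_eq_zero_of_norm_eq_one hd' hspeed s)
  rw [hA_eq, inner_add_left, real_inner_smul_left, real_inner_self_eq_norm_sq, hspeed s, add_smul,
    ← hcross, one_pow, mul_one]
end

section
/- Let A be a skew-symmetric real 3×3 matrix (Aᵀ = −A), c ∈ ℝ, and v : ℝ → ℝ³ a smooth curve with |v(s)| = 1 and |v'(s)| = 1 for all s (a unit-speed curve on S²). If v satisfies the reduced Schrödinger soliton equation v(s) × v''(s) = A·v(s) − c·v'(s) for all s, then setting q(s) := ⟨A·v(s), v'(s)⟩, the curve v satisfies the magnetic geodesic equation on S²: v''(s) + v(s) = (c − q(s)) · ( v(s) × v'(s) ) for all s. In particular, the covariant acceleration ∇_s v' = v'' + |v'|² v of v on S² is (c − q) times the rotated tangent J v' = v × v', so v is a magnetic geodesic on S² with geodesic curvature c − q. -/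
/-!
Differentiating `|v|² = 1` and `|v'|² = 1` gives `⟨v, v'⟩ = 0`, `⟨v, v''⟩ = -1` and `⟨v', v''⟩ = 0`.
Hence `b = v'' + v` is orthogonal to both `v` and `v'`. Since `v, v', n = v × v'` is an orthonormal
frame, `b = ⟨b, n⟩ n`, and `⟨b, n⟩ = ⟨v'', v × v'⟩ = -⟨v × v'', v'⟩`. Pairing the soliton equation
with `v'` evaluates the last expression as `c - ⟨A v, v'⟩`.
-/

open scoped Matrix RealInnerProductSpace

/-- Leibniz rule for a constant inner product `⟪f, g⟫` along a curve. -/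
lemma inner_deriv_of_const {f g : ℝ → EuclideanSpace ℝ (Fin 3)} {r : ℝ}
    (hf : Differentiable ℝ f) (hg : Differentiable ℝ g) (h : ∀ s, ⟪f s, g s⟫ = r) (s : ℝ) :
    ⟪f s, deriv g s⟫ + ⟪deriv f s, g s⟫ = 0 := by
  have h1 := (hf s).hasDerivAt.inner ℝ (hg s).hasDerivAt
  simp only [h] at h1
  exact h1.unique (hasDerivAt_const s r)

/-- The frame `v, w, v × w` attached to an orthonormal pair `v, w` is orthonormal, so a vector `a`
with `⟪v, a⟫ = -1` and `⟪w, a⟫ = 0` satisfies `a + v = det (v, w, a) • (v × w)`; here the determinant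
is written as `-⟪v × a, w⟫`. -/
lemma add_eq_smul_cross3 {v w a : EuclideanSpace ℝ (Fin 3)} (hvv : ⟪v, v⟫ = 1) (hww : ⟪w, w⟫ = 1)
    (hvw : ⟪v, w⟫ = 0) (hva : ⟪v, a⟫ = -1) (hwa : ⟪w, a⟫ = 0) :
    a + v = (-⟪cross3 v a, w⟫) • cross3 v w := by
  simp only [PiLp.inner_apply, Fin.sum_univ_three, RCLike.inner_apply, conj_trivial]
    at hvv hww hvw hva hwa
  -- `det (v, w, a + v) n - |n|² (a + v) = n × (n × (a + v))`, expanded by the triple product formula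
  ext i
  fin_cases i <;>
  simp [cross3, cross_apply, PiLp.inner_apply, Fin.sum_univ_three]
  · linear_combination (-(a 0 + v 0) * (w 0^2+w 1^2+w 2^2)) * hvv - (a 0 + v 0) * hww + (a 0 + v 0) * (v 0*w 0+v 1*w 1+v 2*w 2) * hvw
      - (w 0 * (v 0*w 0+v 1*w 1+v 2*w 2) - v 0 * (w 0^2+w 1^2+w 2^2)) * (hva + hvv)
      + (w 0 * (v 0^2+v 1^2+v 2^2) - v 0 * (v 0*w 0+v 1*w 1+v 2*w 2)) * (hwa + hvw)
  · linear_combination (-(a 1 + v 1) * (w 0^2+w 1^2+w 2^2)) * hvv - (a 1 + v 1) * hww + (a 1 + v 1) * (v 0*w 0+v 1*w 1+v 2*w 2) * hvw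
      - (w 1 * (v 0*w 0+v 1*w 1+v 2*w 2) - v 1 * (w 0^2+w 1^2+w 2^2)) * (hva + hvv)
      + (w 1 * (v 0^2+v 1^2+v 2^2) - v 1 * (v 0*w 0+v 1*w 1+v 2*w 2)) * (hwa + hvw)
  · linear_combination (-(a 2 + v 2) * (w 0^2+w 1^2+w 2^2)) * hvv - (a 2 + v 2) * hww + (a 2 + v 2) * (v 0*w 0+v 1*w 1+v 2*w 2) * hvw
      - (w 2 * (v 0*w 0+v 1*w 1+v 2*w 2) - v 2 * (w 0^2+w 1^2+w 2^2)) * (hva + hvv)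
      + (w 2 * (v 0^2+v 1^2+v 2^2) - v 2 * (v 0*w 0+v 1*w 1+v 2*w 2)) * (hwa + hvw)

/-- if a unit-speed spherical curve `v` satisfies the reduced Schrödinger
soliton equation `v × v'' = A·v - c·v'` (`A` skew-symmetric), then, with
`q := ⟨A·v, v'⟩`, it satisfies the magnetic geodesic equation
`v'' + v = (c - q) (v × v')` on `S²`; in particular the covariant acceleration
`∇ₛv' = v'' + |v'|² v` equals `(c - q)` times the rotated tangent `J v' = v × v'`,
i.e. `v` is a magnetic geodesic on `S²` with geodesic curvature `c - q`. -/
theorem soliton_is_magnetic_geodesic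
    (A : Matrix (Fin 3) (Fin 3) ℝ) (hA : Aᵀ = -A) (c : ℝ)
    (v : ℝ → EuclideanSpace ℝ (Fin 3)) (hv : ContDiff ℝ (⊤ : ℕ∞) v)
    (hnorm : ∀ s : ℝ, ‖v s‖ = 1) (hspeed : ∀ s : ℝ, ‖deriv v s‖ = 1)
    (heq : ∀ s : ℝ, cross3 (v s) (deriv (deriv v) s)
        = mulVecE A (v s) - c • deriv v s) :
    ∀ s : ℝ,
      deriv (deriv v) s + v s
        = (c - ⟪mulVecE A (v s), deriv v s⟫) • cross3 (v s) (deriv v s) ∧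
      deriv (deriv v) s + ‖deriv v s‖ ^ 2 • v s
        = (c - ⟪mulVecE A (v s), deriv v s⟫) • cross3 (v s) (deriv v s) := by
  intro s
  have hv1 : Differentiable ℝ v := hv.differentiable (by simp)
  have hv2 : Differentiable ℝ (deriv v) :=
    ((contDiff_infty_iff_deriv.1 hv).2).differentiable (by simp)
  have hvv : ∀ s, ⟪v s, v s⟫ = 1 := fun s => by
    rw [real_inner_self_eq_norm_sq, hnorm, one_pow]
  have hww : ∀ s, ⟪deriv v s, deriv v s⟫ = 1 := fun s => by
    rw [real_inner_self_eq_norm_sq, hspeed, one_pow]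
  have hvw : ∀ s, ⟪v s, deriv v s⟫ = 0 := fun s => by
    have h := inner_deriv_of_const hv1 hv1 hvv s
    linarith [real_inner_comm (v s) (deriv v s)]
  have hva : ⟪v s, deriv (deriv v) s⟫ = -1 := by
    linarith [inner_deriv_of_const hv1 hv2 hvw s, hww s]
  have hwa : ⟪deriv v s, deriv (deriv v) s⟫ = 0 := by
    linarith [inner_deriv_of_const hv2 hv2 hww s,
      real_inner_comm (deriv v s) (deriv (deriv v) s)]
  have key := add_eq_smul_cross3 (hvv s) (hww s) (hvw s) hva hwa
  rw [heq s, inner_sub_left, real_inner_smul_left, hww s, mul_one, neg_sub] at key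
  exact ⟨key, by rw [hspeed, one_pow, one_smul]; exact key⟩
end

section
/- Let r > 0, k ≠ 0, ω, σ ∈ ℝ, and let h : ℝ → ℝ be a smooth function. Define the curve u : ℝ → ℝ³ on the cylinder of radius r by u(x) := (r cos(kx), r sin(kx), h(x)), and the Killing vector field V : ℝ³ → ℝ³ by V(p₁,p₂,p₃) := ( −(ω/r) p₂, (ω/r) p₁, σ ) (the combination of the rotation around the z-axis with speed ω and the translation along the z-axis with speed σ). Then u'''(x) = V(u(x)) for all x ∈ ℝ if and only if ω = −r k³ and there exist constants C₁, C₂, C₃ ∈ ℝ such that h(x) = (σ/6) x³ + C₃ x² + C₂ x + C₁ for all x. -/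
/-! Everything is computed coordinatewise. Differentiating three times gives
`u''' = (r k³ sin kx, -r k³ cos kx, h''')` (`iter_deriv_curve`), while
`V(u) = (-ω sin kx, ω cos kx, σ)`. At `x = 0` the second coordinate of the equation forces
`ω = -r k³`, and with this value the first two coordinates agree identically. The third coordinate
is `h''' = σ`, and integrating it three times gives the cubic polynomial
(`third_deriv_const_iff`). -/

/-- Inclusion of a coordinate vector into Euclidean 3-space. -/
noncomputable def toE3 (a : Fin 3 → ℝ) : EuclideanSpace ℝ (Fin 3) :=
  (WithLp.equiv 2 (Fin 3 → ℝ)).symm a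

theorem hasDerivAt_toE3 {a b c : ℝ → ℝ} {a' b' c' x : ℝ}
    (ha : HasDerivAt a a' x) (hb : HasDerivAt b b' x) (hc : HasDerivAt c c' x) :
    HasDerivAt (fun y => toE3 ![a y, b y, c y]) (toE3 ![a', b', c']) x := by
  have hp : HasDerivAt (fun y => ![a y, b y, c y]) ![a', b', c'] x := by
    rw [hasDerivAt_pi]
    intro i
    fin_cases i
    · exact ha
    · exact hb
    · exact hc
  exact (PiLp.hasFDerivAt_toLp (𝕜 := ℝ) 2 _).comp_hasDerivAt x hp

theorem toE3_inj {a b : Fin 3 → ℝ} : toE3 a = toE3 b ↔ a = b :=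
  (WithLp.equiv 2 (Fin 3 → ℝ)).symm.injective.eq_iff

/-- Two functions on the line with the same derivative differ by their difference at `0`. -/
theorem eq_add_const_of_hasDerivAt {f g d : ℝ → ℝ}
    (hf : ∀ x, HasDerivAt f (d x) x) (hg : ∀ x, HasDerivAt g (d x) x) (x : ℝ) :
    f x = g x + (f 0 - g 0) := by
  have hd : ∀ y, HasDerivAt (fun y => f y - g y) 0 y := fun y => by
    simpa using (hf y).fun_sub (hg y)
  have := is_const_of_deriv_eq_zero (fun y => (hd y).differentiableAt) (fun y => (hd y).deriv) x 0
  linarith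

theorem hasDerivAt_mul_cos (A k x : ℝ) :
    HasDerivAt (fun y => A * Real.cos (k * y)) (-(A * k) * Real.sin (k * x)) x := by
  refine ((((hasDerivAt_id' x).const_mul k).cos).const_mul A).congr_deriv ?_
  ring

theorem hasDerivAt_mul_sin (A k x : ℝ) :
    HasDerivAt (fun y => A * Real.sin (k * y)) (A * k * Real.cos (k * x)) x := by
  refine ((((hasDerivAt_id' x).const_mul k).sin).const_mul A).congr_deriv ?_
  ring

/-- The third derivative of the curve over the cylinder with height function `h`, where
`h₁, h₂, h₃` are the first three derivatives of `h`. -/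
theorem iter_deriv_curve {r k : ℝ} {h h₁ h₂ h₃ : ℝ → ℝ}
    (H₁ : ∀ x, HasDerivAt h (h₁ x) x) (H₂ : ∀ x, HasDerivAt h₁ (h₂ x) x)
    (H₃ : ∀ x, HasDerivAt h₂ (h₃ x) x) (x : ℝ) :
    deriv (deriv (deriv fun y => toE3 ![r * Real.cos (k * y), r * Real.sin (k * y), h y])) x
      = toE3 ![r * k ^ 3 * Real.sin (k * x), -(r * k ^ 3) * Real.cos (k * x), h₃ x] := by
  have e₁ := funext fun x => (hasDerivAt_toE3 (hasDerivAt_mul_cos r k x)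
    (hasDerivAt_mul_sin r k x) (H₁ x)).deriv
  have e₂ := funext fun x => (hasDerivAt_toE3 (hasDerivAt_mul_sin (-(r * k)) k x)
    (hasDerivAt_mul_cos (r * k) k x) (H₂ x)).deriv
  have e₃ := (hasDerivAt_toE3 (hasDerivAt_mul_cos (-(r * k) * k) k x)
    (hasDerivAt_mul_sin (-(r * k * k)) k x) (H₃ x)).deriv
  rw [e₁, e₂, e₃]
  congr 3
  · ring
  · congr 1
    ring

/-- The solutions of `h''' = σ` are the polynomials of degree at most three
whose cubic coefficient is `σ / 6`; here `h₁, h₂, h₃` are the first three derivatives of `h`. -/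
theorem third_deriv_const_iff {σ : ℝ} {h h₁ h₂ h₃ : ℝ → ℝ}
    (H₁ : ∀ x, HasDerivAt h (h₁ x) x) (H₂ : ∀ x, HasDerivAt h₁ (h₂ x) x)
    (H₃ : ∀ x, HasDerivAt h₂ (h₃ x) x) :
    (∀ x, h₃ x = σ) ↔ ∃ C₁ C₂ C₃ : ℝ, ∀ x : ℝ,
      h x = σ / 6 * x ^ 3 + C₃ * x ^ 2 + C₂ * x + C₁ := by
  have P₁ : ∀ a b c d x : ℝ, HasDerivAt (fun x => a * x ^ 3 + b * x ^ 2 + c * x + d)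
      (3 * a * x ^ 2 + 2 * b * x + c) x := fun a b c d x => by
    refine (((((hasDerivAt_pow 3 x).const_mul a).fun_add ((hasDerivAt_pow 2 x).const_mul b)).fun_add
      ((hasDerivAt_id' x).const_mul c)).add_const d).congr_deriv ?_
    norm_num
    ring
  constructor
  · intro H
    -- each antiderivative is written as a cubic polynomial so that `P₁` applies
    have E₂ : ∀ x, h₂ x = σ * x + h₂ 0 := fun x => by
      have := eq_add_const_of_hasDerivAt H₃ (g := fun x => 0 * x ^ 3 + 0 * x ^ 2 + σ * x + 0)
        (fun x => by simpa [H x] using P₁ 0 0 σ 0 x) x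
      simpa using this
    have E₁ : ∀ x, h₁ x = σ / 2 * x ^ 2 + h₂ 0 * x + h₁ 0 := fun x => by
      have := eq_add_const_of_hasDerivAt H₂
        (g := fun x => 0 * x ^ 3 + σ / 2 * x ^ 2 + h₂ 0 * x + 0)
        (fun x => by
          rw [E₂ x]
          convert P₁ 0 (σ / 2) (h₂ 0) 0 x using 1
          ring) x
      simpa using this
    refine ⟨h 0, h₁ 0, h₂ 0 / 2, fun x => ?_⟩
    have := eq_add_const_of_hasDerivAt H₁
      (g := fun x => σ / 6 * x ^ 3 + h₂ 0 / 2 * x ^ 2 + h₁ 0 * x + 0)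
      (fun x => by
        rw [E₁ x]
        convert P₁ (σ / 6) (h₂ 0 / 2) (h₁ 0) 0 x using 1
        ring) x
    simpa using this
  · rintro ⟨C₁, C₂, C₃, H⟩ x
    have E₀ : h = fun x => σ / 6 * x ^ 3 + C₃ * x ^ 2 + C₂ * x + C₁ := funext H
    have E₁ : h₁ = fun x => 0 * x ^ 3 + σ / 2 * x ^ 2 + 2 * C₃ * x + C₂ := funext fun x => by
      subst E₀
      rw [(H₁ x).unique (P₁ _ _ _ _ x)]
      ring
    have E₂ : h₂ = fun x => 0 * x ^ 3 + 0 * x ^ 2 + σ * x + 2 * C₃ := funext fun x => by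
      subst E₁
      rw [(H₂ x).unique (P₁ _ _ _ _ x)]
      ring
    subst E₂
    rw [(H₃ x).unique (P₁ _ _ _ _ x)]
    ring

/-- on the cylinder of radius `r`, the curve
`u(x) = (r cos kx, r sin kx, h(x))` satisfies the reduced KdV soliton equation
`u''' = V(u)` for the Killing field
`V(p) = (-(ω/r) p₂, (ω/r) p₁, σ)` (rotation with speed `ω` plus vertical translation
with speed `σ`) iff `ω = -r k³` and `h(x) = (σ/6) x³ + C₃ x² + C₂ x + C₁`
for some constants `C₁, C₂, C₃`. -/
theorem kdv_soliton_on_cylinder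
    (r k ω σ : ℝ) (hr : 0 < r) (hk : k ≠ 0)
    (h : ℝ → ℝ) (hh : ContDiff ℝ (⊤ : ℕ∞) h)
    (u : ℝ → EuclideanSpace ℝ (Fin 3))
    (hu : ∀ x : ℝ, u x = toE3 ![r * Real.cos (k * x), r * Real.sin (k * x), h x])
    (V : EuclideanSpace ℝ (Fin 3) → EuclideanSpace ℝ (Fin 3))
    (hV : ∀ p : EuclideanSpace ℝ (Fin 3), V p = toE3 ![-(ω / r) * p 1, (ω / r) * p 0, σ]) :
    (∀ x : ℝ, deriv (deriv (deriv u)) x = V (u x))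
      ↔
    (ω = -(r * k ^ 3) ∧ ∃ C₁ C₂ C₃ : ℝ, ∀ x : ℝ,
      h x = σ / 6 * x ^ 3 + C₃ * x ^ 2 + C₂ * x + C₁) := by
  have D₁ := (contDiff_infty_iff_deriv.1 hh).2
  have D₂ := (contDiff_infty_iff_deriv.1 D₁).2
  have H₁ : ∀ x, HasDerivAt h (deriv h x) x := fun x =>
    ((contDiff_infty_iff_deriv.1 hh).1 x).hasDerivAt
  have H₂ : ∀ x, HasDerivAt (deriv h) (deriv (deriv h) x) x := fun x =>
    ((contDiff_infty_iff_deriv.1 D₁).1 x).hasDerivAt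
  have H₃ : ∀ x, HasDerivAt (deriv (deriv h)) (deriv (deriv (deriv h)) x) x := fun x =>
    ((contDiff_infty_iff_deriv.1 D₂).1 x).hasDerivAt
  have hVu : ∀ x, V (u x) = toE3 ![-ω * Real.sin (k * x), ω * Real.cos (k * x), σ] := fun x => by
    have p0 : u x 0 = r * Real.cos (k * x) := by rw [hu]; rfl
    have p1 : u x 1 = r * Real.sin (k * x) := by rw [hu]; rfl
    rw [hV, p0, p1, toE3_inj]
    congr 1
    · field_simp
    · congr 1
      field_simp
  have hu3 : ∀ x, deriv (deriv (deriv u)) x = toE3 ![r * k ^ 3 * Real.sin (k * x),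
      -(r * k ^ 3) * Real.cos (k * x), deriv (deriv (deriv h)) x] := fun x => by
    rw [funext hu]
    exact iter_deriv_curve H₁ H₂ H₃ x
  rw [← third_deriv_const_iff H₁ H₂ H₃]
  simp only [hu3, hVu, toE3_inj]
  constructor
  · intro H
    refine ⟨?_, fun x => congrFun (H x) 2⟩
    have := congrFun (H 0) 1
    simpa using this.symm
  · rintro ⟨rfl, H⟩ x
    rw [H x, neg_neg]
end
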